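/- Let ζ ∈ (-1/2, ∞), α ∈ (0,2], and C₀ > 0. Then there exist constants c > 0 and K > 0 (depending only on ζ, α, C₀) such that for all τ ∈ (0,1], all s ≥ C₀, and all 0 < z ≤ s/2: p_ζ^{(α)}(τ,z,s) ≤ K · p_ζ^{(α)}(1, c, c s). -/

import Mathlib

open MeasureTheory Real Set Filter

/-- Modified Bessel function of the first kind of order `ν`. -/
noncomputable def besselI (ν x : ℝ) : ℝ :=
  ∑' k : ℕ, (x / 2) ^ (2 * (k : ℝ) + ν) / ((Nat.factorial k : ℝ) * Real.Gamma ((k : ℝ) + ν + 1))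

/-- The Bessel heat kernel `p_ζ^{(2)}(t,r,s)`. -/
noncomputable def besselHeat (ζ t r s : ℝ) : ℝ :=
  (r * s) ^ ((1 : ℝ) / 2 - ζ) / (2 * t) * Real.exp (-(r ^ 2 + s ^ 2) / (4 * t)) *
    besselI (ζ - 1 / 2) (r * s / (2 * t))

/-- `σ` is a family of `α/2`-stable subordinator densities. -/
def IsStableSubordinatorDensity (α : ℝ) (σ : ℝ → ℝ → ℝ) : Prop :=
  (∀ t, 0 < t → ∀ τ, 0 < τ → 0 ≤ σ t τ) ∧
  (∀ t, 0 < t → Measurable (σ t)) ∧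
  (∀ t l : ℝ, 0 < t → 0 ≤ l →
    (∫ τ in Ioi (0 : ℝ), Real.exp (-τ * l) * σ t τ) = Real.exp (-t * l ^ (α / 2)))

/-- The `α/2`-subordinated Bessel heat kernel `p_ζ^{(α)}(t,r,s)`. -/
noncomputable def subKernel (ζ : ℝ) (σ : ℝ → ℝ → ℝ) (t r s : ℝ) : ℝ :=
  ∫ τ in Ioi (0 : ℝ), besselHeat ζ τ r s * σ t τ

/-- `p` is the kernel `p_ζ^{(α)}` for `α ∈ (0,2]`: the Bessel heat kernel itself when `α = 2`,
and the `α/2`-subordinated kernel when `α < 2`. -/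
def IsSubordinatedBesselKernel (ζ α : ℝ) (p : ℝ → ℝ → ℝ → ℝ) : Prop :=
  (α = 2 ∧ ∀ t r s : ℝ, p t r s = besselHeat ζ t r s) ∨
  (α < 2 ∧ ∃ σ : ℝ → ℝ → ℝ, IsStableSubordinatorDensity α σ ∧
    ∀ t r s : ℝ, p t r s = subKernel ζ σ t r s)

/-- The entire function `∑ (x/2)^(2k) / (k! Γ(k+a))`, which is `(x/2)^(1-a) I_{a-1}(x)`. -/
noncomputable def normalizedBessel (a x : ℝ) : ℝ :=
  ∑' k : ℕ, (x / 2) ^ (2 * k) / ((Nat.factorial k : ℝ) * Real.Gamma ((k : ℝ) + a))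

lemma factorial_le_mul_Gamma {a : ℝ} (ha : 0 < a) (k : ℕ) :
    min (Real.Gamma a) (Real.Gamma (a + 1)) * (Nat.factorial k : ℝ) ≤
      ((k : ℝ) + 1) * Real.Gamma ((k : ℝ) + a) := by
  have hpos : ∀ k : ℕ, Real.Gamma (a + 1) * (Nat.factorial (k + 1) : ℝ) ≤
      ((k : ℝ) + 1) * Real.Gamma ((k : ℝ) + 1 + a) := by
    intro k
    induction k with
    | zero => simp [add_comm]
    | succ k ih =>
      have h1 : Real.Gamma ((k : ℝ) + 1 + 1 + a) =
          ((k : ℝ) + 1 + a) * Real.Gamma ((k : ℝ) + 1 + a) := by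
        rw [← Real.Gamma_add_one (by positivity)]
        congr 1; ring
      have hG : 0 < Real.Gamma ((k : ℝ) + 1 + a) := Real.Gamma_pos_of_pos (by positivity)
      rw [Nat.factorial_succ]
      push_cast
      rw [h1]
      have h2 : Real.Gamma (a + 1) * (((k : ℝ) + 1 + 1) * (Nat.factorial (k + 1) : ℝ)) ≤
          ((k : ℝ) + 1 + 1) * (((k : ℝ) + 1) * Real.Gamma ((k : ℝ) + 1 + a)) := by
        nlinarith [mul_le_mul_of_nonneg_left ih (by positivity : (0 : ℝ) ≤ (k : ℝ) + 1 + 1)]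
      refine h2.trans (mul_le_mul_of_nonneg_left ?_ (by positivity))
      exact mul_le_mul_of_nonneg_right (by linarith) hG.le
  cases k with
  | zero => simp
  | succ k =>
    have hG : 0 < Real.Gamma ((k : ℝ) + 1 + a) := Real.Gamma_pos_of_pos (by positivity)
    calc min (Real.Gamma a) (Real.Gamma (a + 1)) * (Nat.factorial (k + 1) : ℝ)
        ≤ Real.Gamma (a + 1) * (Nat.factorial (k + 1) : ℝ) := by
          gcongr; exact min_le_right _ _
      _ ≤ ((k : ℝ) + 1) * Real.Gamma ((k : ℝ) + 1 + a) := hpos k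
      _ ≤ _ := by push_cast; gcongr; linarith

lemma min_Gamma_pos {a : ℝ} (ha : 0 < a) : 0 < min (Real.Gamma a) (Real.Gamma (a + 1)) :=
  lt_min (Real.Gamma_pos_of_pos ha) (Real.Gamma_pos_of_pos (by linarith))

lemma normalizedBessel_term_nonneg {a : ℝ} (ha : 0 < a) {x : ℝ} (hx : 0 ≤ x) (k : ℕ) :
    0 ≤ (x / 2) ^ (2 * k) / ((Nat.factorial k : ℝ) * Real.Gamma ((k : ℝ) + a)) := by
  have : 0 < Real.Gamma ((k : ℝ) + a) := Real.Gamma_pos_of_pos (by positivity)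
  positivity

lemma normalizedBessel_term_le {a : ℝ} (ha : 0 < a) {x : ℝ} (hx : 0 ≤ x) (k : ℕ) :
    (x / 2) ^ (2 * k) / ((Nat.factorial k : ℝ) * Real.Gamma ((k : ℝ) + a)) ≤
      (min (Real.Gamma a) (Real.Gamma (a + 1)))⁻¹ * (1 + x) *
        ((x * (1 + 1 / (1 + x))) ^ (2 * k) / (Nat.factorial (2 * k) : ℝ)) := by
  set m := min (Real.Gamma a) (Real.Gamma (a + 1)) with hm
  have hm0 : 0 < m := min_Gamma_pos ha
  have hG : 0 < Real.Gamma ((k : ℝ) + a) := Real.Gamma_pos_of_pos (by positivity)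
  have hf : (0 : ℝ) < (Nat.factorial k : ℝ) := by positivity
  have hf2 : (0 : ℝ) < (Nat.factorial (2 * k) : ℝ) := by positivity
  have h1 : m * (Nat.factorial k : ℝ) ≤ ((k : ℝ) + 1) * Real.Gamma ((k : ℝ) + a) :=
    factorial_le_mul_Gamma ha k
  have h2 : (Nat.factorial (2 * k) : ℝ) ≤
      4 ^ k * ((Nat.factorial k : ℝ) * (Nat.factorial k : ℝ)) := by
    have e := Nat.add_choose_mul_factorial_mul_factorial k k
    have c := Nat.centralBinom_le_four_pow k
    rw [Nat.centralBinom_eq_two_mul_choose] at c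
    rw [← two_mul] at e
    rw [← e]
    have c' : ((Nat.choose (2 * k) k : ℕ) : ℝ) ≤ 4 ^ k := by exact_mod_cast c
    push_cast
    rw [mul_assoc]
    gcongr
  have h3 : (k : ℝ) + 1 ≤ (1 + x) * (1 + 1 / (1 + x)) ^ (2 * k) := by
    have hx1 : (0 : ℝ) < 1 + x := by linarith
    have hb := one_add_mul_le_pow (a := 1 / (1 + x))
      (by have : 0 < 1 / (1 + x) := by positivity
          linarith) (2 * k)
    calc (k : ℝ) + 1 ≤ (1 + x) * (1 + ((2 * k : ℕ) : ℝ) * (1 / (1 + x))) := by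
          push_cast
          field_simp
          have : (0 : ℝ) ≤ k := by positivity
          linarith
      _ ≤ _ := by gcongr
  have hxx : (x / 2) ^ (2 * k) = x ^ (2 * k) / 4 ^ k := by
    rw [div_pow]; congr 1; rw [pow_mul]; norm_num
  have hP : 0 ≤ x ^ (2 * k) := by positivity
  rw [hxx, mul_pow, div_div, div_le_iff₀ (by positivity)]
  have key : (Nat.factorial (2 * k) : ℝ) * m ≤ ((1 + x) * (1 + 1 / (1 + x)) ^ (2 * k)) *
      (4 ^ k * ((Nat.factorial k : ℝ) * Real.Gamma ((k : ℝ) + a))) := by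
    calc (Nat.factorial (2 * k) : ℝ) * m
        ≤ 4 ^ k * ((Nat.factorial k : ℝ) * (Nat.factorial k : ℝ)) * m := by gcongr
      _ = 4 ^ k * (Nat.factorial k : ℝ) * (m * (Nat.factorial k : ℝ)) := by ring
      _ ≤ 4 ^ k * (Nat.factorial k : ℝ) * (((k : ℝ) + 1) * Real.Gamma ((k : ℝ) + a)) := by
          gcongr
      _ = ((k : ℝ) + 1) * (4 ^ k * ((Nat.factorial k : ℝ) * Real.Gamma ((k : ℝ) + a))) := by ring
      _ ≤ _ := by gcongr
  calc x ^ (2 * k) = x ^ (2 * k) * ((Nat.factorial (2 * k) : ℝ) * m) /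
        ((Nat.factorial (2 * k) : ℝ) * m) := by field_simp
    _ ≤ x ^ (2 * k) * (((1 + x) * (1 + 1 / (1 + x)) ^ (2 * k)) *
      (4 ^ k * ((Nat.factorial k : ℝ) * Real.Gamma ((k : ℝ) + a)))) /
        ((Nat.factorial (2 * k) : ℝ) * m) := by gcongr
    _ = _ := by field_simp

lemma summable_normalizedBessel {a : ℝ} (ha : 0 < a) {x : ℝ} (hx : 0 ≤ x) :
    Summable fun k : ℕ =>
      (x / 2) ^ (2 * k) / ((Nat.factorial k : ℝ) * Real.Gamma ((k : ℝ) + a)) :=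
  Summable.of_nonneg_of_le (normalizedBessel_term_nonneg ha hx) (normalizedBessel_term_le ha hx)
    ((Real.hasSum_cosh _).summable.mul_left _)

lemma normalizedBessel_le {a : ℝ} (ha : 0 < a) {x : ℝ} (hx : 0 ≤ x) :
    normalizedBessel a x ≤
      (min (Real.Gamma a) (Real.Gamma (a + 1)))⁻¹ * Real.exp 1 * ((1 + x) * Real.exp x) := by
  have hm := min_Gamma_pos ha
  have hx1 : (0 : ℝ) < 1 + x := by linarith
  calc normalizedBessel a x
      ≤ (min (Real.Gamma a) (Real.Gamma (a + 1)))⁻¹ * (1 + x) *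
          Real.cosh (x * (1 + 1 / (1 + x))) :=
        hasSum_le (normalizedBessel_term_le ha hx) (summable_normalizedBessel ha hx).hasSum
          ((Real.hasSum_cosh _).mul_left _)
    _ ≤ (min (Real.Gamma a) (Real.Gamma (a + 1)))⁻¹ * (1 + x) * Real.exp (1 + x) := by
        gcongr
        have hy : 0 ≤ x * (1 + 1 / (1 + x)) := by positivity
        have hyx : x * (1 + 1 / (1 + x)) ≤ 1 + x := by
          field_simp
          nlinarith
        have := Real.exp_le_exp.2 hyx
        have h' : Real.exp (-(x * (1 + 1 / (1 + x)))) ≤ Real.exp (x * (1 + 1 / (1 + x))) :=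
          Real.exp_le_exp.2 (by linarith)
        rw [Real.cosh_eq]
        linarith
    _ = _ := by rw [Real.exp_add]; ring

lemma inv_Gamma_le_normalizedBessel {a : ℝ} (ha : 0 < a) {x : ℝ} (hx : 0 ≤ x) :
    (Real.Gamma a)⁻¹ ≤ normalizedBessel a x := by
  have h := (summable_normalizedBessel ha hx).le_tsum 0
    fun k _ => normalizedBessel_term_nonneg ha hx k
  simpa [normalizedBessel] using h

lemma monotoneOn_normalizedBessel {a : ℝ} (ha : 0 < a) :
    MonotoneOn (normalizedBessel a) (Ici 0) := by
  intro x hx y hy hxy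
  have hx' : (0 : ℝ) ≤ x := hx
  refine (summable_normalizedBessel ha hx).tsum_le_tsum (fun k => ?_)
    (summable_normalizedBessel ha hy)
  have : 0 < Real.Gamma ((k : ℝ) + a) := Real.Gamma_pos_of_pos (by positivity)
  gcongr

lemma besselHeat_eq (ζ : ℝ) {u r s : ℝ} (hu : 0 < u) (hr : 0 < r) (hs : 0 < s) :
    besselHeat ζ u r s = (4 : ℝ) ^ ((1 : ℝ) / 2 - ζ) / 2 * (u ^ (-(ζ + 1 / 2)) *
      (Real.exp (-(r ^ 2 + s ^ 2) / (4 * u)) *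
        normalizedBessel (ζ + 1 / 2) (r * s / (2 * u)))) := by
  have hx : 0 < r * s / (2 * u) / 2 := by positivity
  have hI : besselI (ζ - 1 / 2) (r * s / (2 * u)) =
      (r * s / (2 * u) / 2) ^ (ζ - 1 / 2) * normalizedBessel (ζ + 1 / 2) (r * s / (2 * u)) := by
    unfold besselI normalizedBessel
    rw [← tsum_mul_left]
    refine tsum_congr fun k => ?_
    rw [Real.rpow_add hx, show (2 * (k : ℝ)) = ((2 * k : ℕ) : ℝ) by push_cast; ring,
      Real.rpow_natCast, show (k : ℝ) + (ζ - 1 / 2) + 1 = (k : ℝ) + (ζ + 1 / 2) by ring]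
    ring
  unfold besselHeat
  rw [hI]
  have h1 : r * s / (2 * u) / 2 = (r * s) / (4 * u) := by field_simp; norm_num
  have h2 : (r * s) ^ ((1 : ℝ) / 2 - ζ) / (2 * u) * (r * s / (2 * u) / 2) ^ (ζ - 1 / 2) =
      (4 : ℝ) ^ ((1 : ℝ) / 2 - ζ) / 2 * u ^ (-(ζ + 1 / 2)) := by
    rw [h1, Real.div_rpow (by positivity) (by positivity),
      Real.mul_rpow (by norm_num : (0 : ℝ) ≤ 4) hu.le,
      show (1 : ℝ) / 2 - ζ = -(ζ - 1 / 2) by ring, Real.rpow_neg (by positivity),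
      Real.rpow_neg (by norm_num : (0 : ℝ) ≤ 4),
      show -(ζ + 1 / 2) = -(ζ - 1 / 2) - 1 by ring, Real.rpow_sub_one hu.ne',
      Real.rpow_neg hu.le]
    have : (0:ℝ) < (r * s) ^ (ζ - 1 / 2) := by positivity
    field_simp
  calc _ = ((r * s) ^ ((1 : ℝ) / 2 - ζ) / (2 * u) * (r * s / (2 * u) / 2) ^ (ζ - 1 / 2)) *
        (Real.exp (-(r ^ 2 + s ^ 2) / (4 * u)) *
          normalizedBessel (ζ + 1 / 2) (r * s / (2 * u))) := by ring
    _ = _ := by rw [h2]; ring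

lemma rpow_le_mul_exp {M b y : ℝ} (hM : 0 < M) (hb : 0 < b) (hy : 0 ≤ y) :
    y ^ M ≤ (M / b) ^ M * Real.exp (b * y) := by
  have h : b * y / M ≤ Real.exp (b * y / M) := by linarith [Real.add_one_le_exp (b * y / M)]
  calc y ^ M = (M / b * (b * y / M)) ^ M := by congr 1; field_simp
    _ = (M / b) ^ M * (b * y / M) ^ M := Real.mul_rpow (by positivity) (by positivity)
    _ ≤ (M / b) ^ M * (Real.exp (b * y / M)) ^ M := by gcongr
    _ = _ := by rw [← Real.exp_mul]; congr 2; field_simp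

lemma besselHeat_nonneg {ζ : ℝ} (hζ : -1 / 2 < ζ) {u r s : ℝ} (hu : 0 < u) (hr : 0 < r)
    (hs : 0 < s) : 0 ≤ besselHeat ζ u r s := by
  have ha : 0 < ζ + 1 / 2 := by linarith
  have h := inv_Gamma_le_normalizedBessel ha (x := r * s / (2 * u)) (by positivity)
  have hG : 0 < Real.Gamma (ζ + 1 / 2) := Real.Gamma_pos_of_pos ha
  have h0 : 0 ≤ normalizedBessel (ζ + 1 / 2) (r * s / (2 * u)) := le_trans (by positivity) h
  rw [besselHeat_eq ζ hu hr hs]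
  positivity

lemma exists_besselHeat_le {ζ : ℝ} (hζ : -1 / 2 < ζ) :
    ∃ C : ℝ, 0 < C ∧ ∀ u r s : ℝ, 0 < u → 0 < r → 0 < s →
      besselHeat ζ u r s ≤ C * (u ^ (-(ζ + 1 / 2)) * ((1 + r * s / (2 * u)) *
        Real.exp (-(r ^ 2 + s ^ 2) / (4 * u) + r * s / (2 * u)))) := by
  have ha : 0 < ζ + 1 / 2 := by linarith
  have hm := min_Gamma_pos ha
  refine ⟨(4 : ℝ) ^ ((1 : ℝ) / 2 - ζ) / 2 *
    ((min (Real.Gamma (ζ + 1 / 2)) (Real.Gamma (ζ + 1 / 2 + 1)))⁻¹ * Real.exp 1),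
    by positivity, fun u r s hu hr hs => ?_⟩
  have h := normalizedBessel_le ha (x := r * s / (2 * u)) (by positivity)
  rw [besselHeat_eq ζ hu hr hs, Real.exp_add]
  refine (mul_le_mul_of_nonneg_left (mul_le_mul_of_nonneg_left
    (mul_le_mul_of_nonneg_left h (Real.exp_pos _).le) (by positivity)) (by positivity)).trans_eq ?_
  ring

lemma exists_le_besselHeat {ζ : ℝ} (hζ : -1 / 2 < ζ) :
    ∃ κ : ℝ, 0 < κ ∧ ∀ u r s : ℝ, 0 < u → 0 < r → 0 < s →
      κ * (u ^ (-(ζ + 1 / 2)) * Real.exp (-(r ^ 2 + s ^ 2) / (4 * u))) ≤ besselHeat ζ u r s := by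
  have ha : 0 < ζ + 1 / 2 := by linarith
  have hG : 0 < Real.Gamma (ζ + 1 / 2) := Real.Gamma_pos_of_pos ha
  refine ⟨(4 : ℝ) ^ ((1 : ℝ) / 2 - ζ) / 2 * (Real.Gamma (ζ + 1 / 2))⁻¹,
    by positivity, fun u r s hu hr hs => ?_⟩
  have h := inv_Gamma_le_normalizedBessel ha (x := r * s / (2 * u)) (by positivity)
  rw [besselHeat_eq ζ hu hr hs]
  refine le_trans (le_of_eq ?_) (mul_le_mul_of_nonneg_left (mul_le_mul_of_nonneg_left
    (mul_le_mul_of_nonneg_left h (Real.exp_pos _).le) (by positivity)) (by positivity))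
  ring

lemma exists_besselHeat_le_of_le_half {ζ : ℝ} (hζ : -1 / 2 < ζ) :
    ∃ C : ℝ, 0 < C ∧ ∀ u z s : ℝ, 0 < u → 0 < z → 0 < s → z ≤ s / 2 →
      besselHeat ζ u z s ≤ C * (u ^ (-(ζ + 1 / 2)) * Real.exp (-(s ^ 2 / (32 * u)))) := by
  obtain ⟨C, hC, h⟩ := exists_besselHeat_le hζ
  refine ⟨C * 8, by positivity, fun u z s hu hz hs hzs => (h u z s hu hz hs).trans ?_⟩
  set x := z * s / (2 * u) with hx
  have h1 : 1 + x ≤ 8 * Real.exp (x / 8) := by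
    have hx0 : 0 ≤ x := by positivity
    linarith [Real.add_one_le_exp (x / 8)]
  have h2 : x / 8 + (-(z ^ 2 + s ^ 2) / (4 * u) + x) ≤ -(s ^ 2 / (32 * u)) := by
    have e : -(s ^ 2 / (32 * u)) - (x / 8 + (-(z ^ 2 + s ^ 2) / (4 * u) + x)) =
        ((s / 2 - z) * (7 * s / 4 - z)) / (4 * u) := by
      rw [hx]; field_simp; ring
    have : 0 ≤ ((s / 2 - z) * (7 * s / 4 - z)) / (4 * u) :=
      div_nonneg (mul_nonneg (by linarith) (by linarith)) (by positivity)
    linarith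
  rw [mul_assoc C 8]
  refine mul_le_mul_of_nonneg_left ?_ hC.le
  calc u ^ (-(ζ + 1 / 2)) * ((1 + x) * Real.exp (-(z ^ 2 + s ^ 2) / (4 * u) + x))
      ≤ u ^ (-(ζ + 1 / 2)) * ((8 * Real.exp (x / 8)) *
          Real.exp (-(z ^ 2 + s ^ 2) / (4 * u) + x)) := by gcongr
    _ = 8 * (u ^ (-(ζ + 1 / 2)) * Real.exp (x / 8 + (-(z ^ 2 + s ^ 2) / (4 * u) + x))) := by
        rw [Real.exp_add (x / 8)]; ring
    _ ≤ _ := by gcongr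

lemma aemeasurable_besselHeat {ζ : ℝ} (hζ : -1 / 2 < ζ) {r s : ℝ} (hr : 0 < r) (hs : 0 < s) :
    AEMeasurable (fun u => besselHeat ζ u r s) (volume.restrict (Ioi 0)) := by
  have ha : 0 < ζ + 1 / 2 := by linarith
  have hG : AEMeasurable (fun u => normalizedBessel (ζ + 1 / 2) (r * s / (2 * u)))
      (volume.restrict (Ioi 0)) := by
    refine aemeasurable_restrict_of_antitoneOn measurableSet_Ioi fun u hu v hv huv => ?_
    have hu' : (0 : ℝ) < u := hu
    have hv' : (0 : ℝ) < v := hv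
    refine monotoneOn_normalizedBessel ha ?_ ?_ ?_
    · exact mem_Ici.2 (by positivity)
    · exact mem_Ici.2 (by positivity)
    · gcongr
  have h : AEMeasurable (fun u : ℝ => (4 : ℝ) ^ ((1 : ℝ) / 2 - ζ) / 2 * (u ^ (-(ζ + 1 / 2)) *
      (Real.exp (-(r ^ 2 + s ^ 2) / (4 * u)) *
        normalizedBessel (ζ + 1 / 2) (r * s / (2 * u))))) (volume.restrict (Ioi 0)) := by
    refine AEMeasurable.const_mul (AEMeasurable.mul ?_ (AEMeasurable.mul ?_ hG)) _
    · exact Measurable.aemeasurable (by fun_prop)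
    · exact Measurable.aemeasurable (by fun_prop)
  refine h.congr ?_
  filter_upwards [ae_restrict_mem measurableSet_Ioi] with u hu
  exact (besselHeat_eq ζ hu hr hs).symm

namespace IsStableSubordinatorDensity

variable {α : ℝ} {σ : ℝ → ℝ → ℝ}

lemma integrableOn_exp (hσ : IsStableSubordinatorDensity α σ) {t l : ℝ} (ht : 0 < t)
    (hl : 0 ≤ l) : IntegrableOn (fun u => Real.exp (-u * l) * σ t u) (Ioi 0) :=
  Integrable.of_integral_ne_zero (by rw [hσ.2.2 t l ht hl]; exact (Real.exp_pos _).ne')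

lemma integrableOn_self (hσ : IsStableSubordinatorDensity α σ) {t : ℝ} (ht : 0 < t) :
    IntegrableOn (σ t) (Ioi 0) := by
  simpa using hσ.integrableOn_exp ht le_rfl

lemma integral_self (hσ : IsStableSubordinatorDensity α σ) (hα : 0 < α) {t : ℝ} (ht : 0 < t) :
    ∫ u in Ioi (0 : ℝ), σ t u = 1 := by
  have h := hσ.2.2 t 0 ht le_rfl
  rw [Real.zero_rpow (by positivity)] at h
  simpa using h

lemma integrableOn_one_sub_exp (hσ : IsStableSubordinatorDensity α σ) {t l : ℝ} (ht : 0 < t)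
    (hl : 0 ≤ l) : IntegrableOn (fun u => (1 - Real.exp (-u * l)) * σ t u) (Ioi 0) := by
  simp only [sub_mul, one_mul]
  exact Integrable.sub (hσ.integrableOn_self ht) (hσ.integrableOn_exp ht hl)

lemma integral_one_sub_exp (hσ : IsStableSubordinatorDensity α σ) (hα : 0 < α) {t l : ℝ}
    (ht : 0 < t) (hl : 0 ≤ l) :
    ∫ u in Ioi (0 : ℝ), (1 - Real.exp (-u * l)) * σ t u = 1 - Real.exp (-t * l ^ (α / 2)) := by
  simp only [sub_mul, one_mul]
  rw [integral_sub (hσ.integrableOn_self ht) (hσ.integrableOn_exp ht hl),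
    hσ.integral_self hα ht, hσ.2.2 t l ht hl]

lemma integrableOn_rpow_neg (hσ : IsStableSubordinatorDensity α σ) (hα : 0 < α) {t M : ℝ}
    (ht : 0 < t) (hM : 0 < M) : IntegrableOn (fun u => u ^ (-M) * σ t u) (Ioi 0) := by
  have hmeas := hσ.2.1 t ht
  have hF : Integrable (fun x : ℝ × ℝ => x.2 ^ (M - 1) * (Real.exp (-x.1 * x.2) * σ t x.1))
      ((volume.restrict (Ioi 0)).prod (volume.restrict (Ioi 0))) := by
    rw [integrable_prod_iff' (by
      refine Measurable.aestronglyMeasurable ?_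
      have := hmeas.comp (measurable_fst : Measurable (Prod.fst : ℝ × ℝ → ℝ))
      simp only [Function.comp_def] at this
      fun_prop)]
    constructor
    · filter_upwards [ae_restrict_mem measurableSet_Ioi] with l hl
      exact (hσ.integrableOn_exp ht (le_of_lt hl)).const_mul _
    · have hI : IntegrableOn (fun l : ℝ => l ^ (M - 1) * Real.exp (-t * l ^ (α / 2))) (Ioi 0) :=
        integrableOn_rpow_mul_exp_neg_mul_rpow (by linarith) (by positivity) ht
      refine hI.congr ?_
      filter_upwards [ae_restrict_mem measurableSet_Ioi] with l hl
      have hl' : (0 : ℝ) < l := hl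
      rw [← hσ.2.2 t l ht hl'.le, ← integral_const_mul]
      refine setIntegral_congr_fun measurableSet_Ioi fun u hu => ?_
      have := hσ.1 t ht u hu
      exact (Real.norm_of_nonneg (by positivity)).symm
  have h := hF.integral_prod_left.const_mul (Real.Gamma M)⁻¹
  refine h.congr ?_
  filter_upwards [ae_restrict_mem measurableSet_Ioi] with u hu
  have hu' : (0 : ℝ) < u := hu
  have hG : 0 < Real.Gamma M := Real.Gamma_pos_of_pos hM
  have e : ∫ l in Ioi (0 : ℝ), l ^ (M - 1) * (Real.exp (-u * l) * σ t u) =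
      ((1 / u) ^ M * Real.Gamma M) * σ t u := by
    rw [← Real.integral_rpow_mul_exp_neg_mul_Ioi hM hu', ← integral_mul_const]
    refine integral_congr_ae (Eventually.of_forall fun l => ?_)
    simp only [neg_mul]
    ring
  rw [e, one_div, Real.inv_rpow hu'.le, Real.rpow_neg hu'.le]
  field_simp

lemma integrableOn_besselHeat {ζ : ℝ} (hσ : IsStableSubordinatorDensity α σ) (hα : 0 < α)
    (hζ : -1 / 2 < ζ) {t r s : ℝ} (ht : 0 < t) (hr : 0 < r) (hs : 0 < s) :
    IntegrableOn (fun u => besselHeat ζ u r s * σ t u) (Ioi 0) := by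
  obtain ⟨C, hC, h⟩ := exists_besselHeat_le hζ
  have h1 := hσ.integrableOn_rpow_neg hα ht (M := ζ + 1 / 2) (by linarith)
  have h2 := hσ.integrableOn_rpow_neg hα ht (M := ζ + 1 / 2 + 1) (by linarith)
  refine ((h1.add (h2.const_mul (r * s / 2))).const_mul C).mono'
    ((aemeasurable_besselHeat hζ hr hs).mul
      (hσ.2.1 t ht).aemeasurable).aestronglyMeasurable ?_
  filter_upwards [ae_restrict_mem measurableSet_Ioi] with u hu
  have hu' : (0 : ℝ) < u := hu
  have hs0 := hσ.1 t ht u hu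
  have hb := besselHeat_nonneg hζ hu' hr hs
  rw [Real.norm_of_nonneg (by positivity)]
  have hexp : Real.exp (-(r ^ 2 + s ^ 2) / (4 * u) + r * s / (2 * u)) ≤ 1 := by
    rw [Real.exp_le_one_iff]
    have e : -(r ^ 2 + s ^ 2) / (4 * u) + r * s / (2 * u) = -((r - s) ^ 2 / (4 * u)) := by
      field_simp; ring
    rw [e]
    have : 0 ≤ (r - s) ^ 2 / (4 * u) := by positivity
    linarith
  calc besselHeat ζ u r s * σ t u
      ≤ C * (u ^ (-(ζ + 1 / 2)) * ((1 + r * s / (2 * u)) * 1)) * σ t u := by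
        refine mul_le_mul_of_nonneg_right ((h u r s hu' hr hs).trans ?_) hs0
        gcongr
    _ = _ := by
        have e : u ^ (-(ζ + 1 / 2 + 1)) = u ^ (-(ζ + 1 / 2)) / u := by
          rw [← Real.rpow_sub_one hu'.ne']; congr 1; ring
        simp only [Pi.add_apply]
        rw [e]
        field_simp

end IsStableSubordinatorDensity

lemma div_one_add_le_one_sub_exp_neg {v : ℝ} (hv : 0 < v) :
    v / (1 + v) ≤ 1 - Real.exp (-v) := by
  have h : Real.exp (-v) ≤ 1 / (1 + v) := by
    rw [Real.exp_neg, ← one_div]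
    exact one_div_le_one_div_of_le (by positivity) (by linarith [Real.add_one_le_exp v])
  have e : v / (1 + v) = 1 - 1 / (1 + v) := by field_simp; ring
  linarith

lemma exists_rpow_mul_exp_le_one_sub_exp {a b : ℝ} (ha : 0 < a) (hb : 0 < b) :
    ∃ D : ℝ, 0 < D ∧ ∀ v : ℝ, 0 < v →
      v ^ (-a) * Real.exp (-(b / v)) ≤ D * (1 - Real.exp (-v)) := by
  refine ⟨((a + 1) / b) ^ (a + 1) + (a / b) ^ a, by positivity, fun v hv => ?_⟩
  have hy : 0 < v⁻¹ := by positivity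
  have h1 := rpow_le_mul_exp (M := a + 1) (by positivity) hb hy.le
  have h2 := rpow_le_mul_exp ha hb hy.le
  rw [Real.rpow_add_one hy.ne', Real.inv_rpow hv.le, ← Real.rpow_neg hv.le] at h1
  rw [Real.inv_rpow hv.le, ← Real.rpow_neg hv.le] at h2
  rw [← div_eq_mul_inv b v] at h1 h2
  set D := ((a + 1) / b) ^ (a + 1) + (a / b) ^ a with hD
  have hD0 : 0 < D := by positivity
  refine le_trans ?_ (mul_le_mul_of_nonneg_left (div_one_add_le_one_sub_exp_neg hv) hD0.le)
  have h3 : v ^ (-a) * (v⁻¹ + 1) ≤ D * Real.exp (b / v) := by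
    rw [hD, add_mul]; linarith
  rw [Real.exp_neg, ← div_eq_mul_inv, div_le_iff₀ (Real.exp_pos _)]
  calc v ^ (-a) = v ^ (-a) * (v⁻¹ + 1) * (v / (1 + v)) := by field_simp
    _ ≤ D * Real.exp (b / v) * (v / (1 + v)) := by gcongr
    _ = _ := by ring

lemma exists_exp_sub_exp_le {a B N : ℝ} (ha : 0 < a) (hB : 0 < B) (hN : 0 < N) :
    ∃ D : ℝ, 0 < D ∧ ∀ v : ℝ, 0 < v →
      Real.exp (-v) - Real.exp (-(2 * v)) ≤
        2 / N * (1 - Real.exp (-(N * v))) + D * (v ^ (-a) * Real.exp (-(B / v))) := by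
  refine ⟨(a / 1) ^ a * Real.exp (B * N), by positivity, fun v hv => ?_⟩
  have hNv : 0 < N * v := by positivity
  rcases le_total (N * v) 1 with hle | hge
  · have h1 := div_one_add_le_one_sub_exp_neg hNv
    have h2 : N * v / 2 ≤ N * v / (1 + N * v) := by gcongr; linarith
    have h3 : v ≤ 2 / N * (1 - Real.exp (-(N * v))) := by
      calc v = 2 / N * (N * v / 2) := by field_simp
        _ ≤ _ := by gcongr; exact h2.trans h1
    have h4 : Real.exp (-v) - Real.exp (-(2 * v)) ≤ v := by
      have e : Real.exp (-(2 * v)) = Real.exp (-v) * Real.exp (-v) := by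
        rw [← Real.exp_add]; congr 1; ring
      rw [e]
      have p0 := Real.exp_pos (-v)
      have p1 : Real.exp (-v) ≤ 1 := Real.exp_le_one_iff.2 (by linarith)
      nlinarith [Real.add_one_le_exp (-v)]
    have h5 : 0 ≤ (a / 1) ^ a * Real.exp (B * N) * (v ^ (-a) * Real.exp (-(B / v))) := by
      positivity
    linarith
  · have h1 : 0 ≤ 2 / N * (1 - Real.exp (-(N * v))) := by
      have : Real.exp (-(N * v)) ≤ 1 := Real.exp_le_one_iff.2 (by linarith)
      exact mul_nonneg (by positivity) (by linarith)
    have h2 := rpow_le_mul_exp ha one_pos hv.le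
    have h3 : B / v ≤ B * N := by
      rw [div_le_iff₀ hv]; nlinarith
    have h4 : 1 ≤ Real.exp (B * N) * Real.exp (-(B / v)) := by
      rw [← Real.exp_add]; exact Real.one_le_exp (by linarith)
    have h5 : Real.exp (-v) ≤ (a / 1) ^ a * v ^ (-a) := by
      have hva : 0 < v ^ a := by positivity
      rw [Real.exp_neg, Real.rpow_neg hv.le, ← div_eq_mul_inv, le_div_iff₀ hva,
        inv_mul_le_iff₀ (Real.exp_pos _)]
      rw [one_mul] at h2
      linarith
    have h6 : (a / 1) ^ a * v ^ (-a) ≤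
        (a / 1) ^ a * Real.exp (B * N) * (v ^ (-a) * Real.exp (-(B / v))) := by
      have hp : 0 ≤ (a / 1) ^ a * v ^ (-a) := by positivity
      nlinarith [mul_le_mul_of_nonneg_left h4 hp]
    linarith [Real.exp_pos (-(2 * v))]

lemma exists_subKernel_le {ζ α : ℝ} {σ : ℝ → ℝ → ℝ} (hζ : -1 / 2 < ζ) (hα : 0 < α)
    (hσ : IsStableSubordinatorDensity α σ) :
    ∃ C : ℝ, 0 < C ∧ ∀ τ z s : ℝ, 0 < τ → τ ≤ 1 → 0 < s → 0 < z → z ≤ s / 2 →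
      subKernel ζ σ τ z s ≤ C * ((s ^ 2) ^ (-(ζ + 1 / 2)) * (1 / s ^ 2) ^ (α / 2)) := by
  obtain ⟨C, hC, h⟩ := exists_besselHeat_le_of_le_half hζ
  obtain ⟨D, hD, hd⟩ := exists_rpow_mul_exp_le_one_sub_exp (a := ζ + 1 / 2) (b := 1 / 32)
    (by linarith) (by norm_num)
  refine ⟨C * D, by positivity, fun τ z s hτ hτ1 hs hz hzs => ?_⟩
  have hl : 0 ≤ 1 / s ^ 2 := by positivity
  have hpt : ∀ u ∈ Ioi (0 : ℝ), besselHeat ζ u z s * σ τ u ≤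
      C * D * (s ^ 2) ^ (-(ζ + 1 / 2)) * ((1 - Real.exp (-u * (1 / s ^ 2))) * σ τ u) := by
    intro u hu
    have hu' : (0 : ℝ) < u := hu
    have hv : 0 < u / s ^ 2 := by positivity
    have e1 : u ^ (-(ζ + 1 / 2)) = (s ^ 2) ^ (-(ζ + 1 / 2)) * (u / s ^ 2) ^ (-(ζ + 1 / 2)) := by
      rw [← Real.mul_rpow (by positivity) hv.le]; congr 1; field_simp
    have e2 : s ^ 2 / (32 * u) = 1 / 32 / (u / s ^ 2) := by field_simp
    have e3 : -u * (1 / s ^ 2) = -(u / s ^ 2) := by ring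
    rw [← mul_assoc]
    refine mul_le_mul_of_nonneg_right ((h u z s hu' hz hs hzs).trans ?_) (hσ.1 τ hτ u hu)
    rw [e1, e2, e3]
    calc _ = C * (s ^ 2) ^ (-(ζ + 1 / 2)) * ((u / s ^ 2) ^ (-(ζ + 1 / 2)) *
          Real.exp (-(1 / 32 / (u / s ^ 2)))) := by ring
      _ ≤ C * (s ^ 2) ^ (-(ζ + 1 / 2)) * (D * (1 - Real.exp (-(u / s ^ 2)))) := by
          exact mul_le_mul_of_nonneg_left (hd _ hv) (by positivity)
      _ = _ := by ring
  calc subKernel ζ σ τ z s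
      ≤ ∫ u in Ioi (0 : ℝ), C * D * (s ^ 2) ^ (-(ζ + 1 / 2)) *
          ((1 - Real.exp (-u * (1 / s ^ 2))) * σ τ u) :=
        setIntegral_mono_on (hσ.integrableOn_besselHeat hα hζ hτ hz hs)
          ((hσ.integrableOn_one_sub_exp hτ hl).const_mul _) measurableSet_Ioi hpt
    _ = C * D * (s ^ 2) ^ (-(ζ + 1 / 2)) * (1 - Real.exp (-τ * (1 / s ^ 2) ^ (α / 2))) := by
        rw [integral_const_mul, hσ.integral_one_sub_exp hα hτ hl]
    _ ≤ C * D * (s ^ 2) ^ (-(ζ + 1 / 2)) * (1 / s ^ 2) ^ (α / 2) := by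
        gcongr
        have hw : 0 ≤ (1 / s ^ 2) ^ (α / 2) := by positivity
        nlinarith [Real.add_one_le_exp (-τ * (1 / s ^ 2) ^ (α / 2))]
    _ = _ := by ring

lemma exists_le_subKernel {ζ α C₀ : ℝ} {σ : ℝ → ℝ → ℝ} (hζ : -1 / 2 < ζ) (hα : 0 < α)
    (hα2 : α < 2) (hC0 : 0 < C₀) (hσ : IsStableSubordinatorDensity α σ) :
    ∃ κ : ℝ, 0 < κ ∧ ∀ s : ℝ, C₀ ≤ s →
      κ * ((s ^ 2) ^ (-(ζ + 1 / 2)) * (1 / s ^ 2) ^ (α / 2)) ≤ subKernel ζ σ 1 1 s := by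
  have ha : 0 < ζ + 1 / 2 := by linarith
  obtain ⟨κ, hκ, h⟩ := exists_le_besselHeat hζ
  set β := α / 2 with hβ
  have hβ0 : 0 < β := by positivity
  have hβ1 : β < 1 := by rw [hβ]; linarith
  set W := (1 / C₀ ^ 2) ^ β with hW
  have h2β : 1 < (2 : ℝ) ^ β := Real.one_lt_rpow (by norm_num) hβ0
  set k₀ := ((2 : ℝ) ^ β - 1) * Real.exp (-((2 : ℝ) ^ β * W)) with hk
  have hk0 : 0 < k₀ := mul_pos (by linarith) (Real.exp_pos _)
  set N := (k₀ / 4) ^ (1 / (β - 1)) with hNdef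
  have hN : 0 < N := by positivity
  have hNβ : N ^ β = k₀ / 4 * N := by
    have : N ^ (β - 1) = k₀ / 4 := by
      rw [hNdef, ← Real.rpow_mul (by positivity), one_div,
        inv_mul_cancel₀ (by linarith : β - 1 < 0).ne, Real.rpow_one]
    rw [Real.rpow_sub_one hN.ne'] at this
    field_simp at this ⊢
    linarith
  set B := (1 + 1 / C₀ ^ 2) / 4 with hB
  have hB0 : 0 < B := by positivity
  obtain ⟨D, hD, hd⟩ := exists_exp_sub_exp_le ha hB0 hN
  refine ⟨κ * k₀ / (2 * D), by positivity, fun s hs => ?_⟩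
  have hs0 : 0 < s := hC0.trans_le hs
  set q := 1 / s ^ 2 with hq
  have hq0 : 0 < q := by positivity
  have hqC : q ≤ 1 / C₀ ^ 2 := by rw [hq]; gcongr
  set w := q ^ β with hw
  have hw0 : 0 < w := by positivity
  have hwW : w ≤ W := Real.rpow_le_rpow hq0.le hqC hβ0.le
  set P := (s ^ 2) ^ (-(ζ + 1 / 2)) with hP
  have hP0 : 0 < P := by positivity
  have hpt : ∀ u ∈ Ioi (0 : ℝ),
      (1 - Real.exp (-u * (2 * q))) * σ 1 u - (1 - Real.exp (-u * q)) * σ 1 u ≤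
        2 / N * ((1 - Real.exp (-u * (N * q))) * σ 1 u) +
          D / (κ * P) * (besselHeat ζ u 1 s * σ 1 u) := by
    intro u hu
    have hu' : (0 : ℝ) < u := hu
    have hv : 0 < u * q := by positivity
    have e1 : u ^ (-(ζ + 1 / 2)) = P * (u * q) ^ (-(ζ + 1 / 2)) := by
      rw [hP, ← Real.mul_rpow (by positivity) hv.le]; congr 1; rw [hq]; field_simp
    have e2 : Real.exp (-(B / (u * q))) ≤ Real.exp (-(1 ^ 2 + s ^ 2) / (4 * u)) := by
      rw [Real.exp_le_exp, neg_div, neg_le_neg_iff]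
      have e : (1 + s ^ 2) / (4 * u) = (1 + q) / 4 / (u * q) := by rw [hq]; field_simp; ring
      rw [one_pow, e, hB]
      gcongr
    have h1 : D * ((u * q) ^ (-(ζ + 1 / 2)) * Real.exp (-(B / (u * q)))) ≤
        D / (κ * P) * besselHeat ζ u 1 s := by
      have h2 := h u 1 s hu' one_pos hs0
      rw [e1] at h2
      calc _ ≤ D * ((u * q) ^ (-(ζ + 1 / 2)) * Real.exp (-(1 ^ 2 + s ^ 2) / (4 * u))) := by gcongr
        _ = D / (κ * P) * (κ * (P * (u * q) ^ (-(ζ + 1 / 2)) *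
            Real.exp (-(1 ^ 2 + s ^ 2) / (4 * u)))) := by field_simp
        _ ≤ _ := by gcongr
    have h3 := hd (u * q) hv
    have h4 : Real.exp (-(u * q)) - Real.exp (-(2 * (u * q))) ≤
        2 / N * (1 - Real.exp (-(N * (u * q)))) + D / (κ * P) * besselHeat ζ u 1 s := by
      linarith
    have h5 := mul_le_mul_of_nonneg_right h4 (hσ.1 1 one_pos u hu)
    have a1 : -u * (2 * q) = -(2 * (u * q)) := by ring
    have a2 : -u * q = -(u * q) := by ring
    have a3 : -u * (N * q) = -(N * (u * q)) := by ring
    rw [a1, a2, a3]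
    linarith
  have i1 := hσ.integrableOn_one_sub_exp one_pos hq0.le
  have i2 := hσ.integrableOn_one_sub_exp one_pos (mul_pos two_pos hq0).le
  have i3 := hσ.integrableOn_one_sub_exp one_pos (mul_pos hN hq0).le
  have i4 := hσ.integrableOn_besselHeat hα hζ one_pos one_pos hs0
  have hint := setIntegral_mono_on (i2.sub i1) ((i3.const_mul (2 / N)).add
    (i4.const_mul (D / (κ * P)))) measurableSet_Ioi hpt
  simp only [Pi.add_apply, Pi.sub_apply] at hint
  rw [integral_sub i2 i1, integral_add (i3.const_mul _) (i4.const_mul _), integral_const_mul,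
    integral_const_mul, hσ.integral_one_sub_exp hα one_pos hq0.le,
    hσ.integral_one_sub_exp hα one_pos (mul_pos two_pos hq0).le,
    hσ.integral_one_sub_exp hα one_pos (mul_pos hN hq0).le, ← hβ,
    Real.mul_rpow two_pos.le hq0.le, Real.mul_rpow hN.le hq0.le, ← hw] at hint
  have hlow : k₀ * w ≤ Real.exp (-1 * w) - Real.exp (-1 * ((2 : ℝ) ^ β * w)) := by
    have c1 : Real.exp (-((2 : ℝ) ^ β * W)) ≤ Real.exp (-((2 : ℝ) ^ β * w)) := by gcongr
    have c2 : Real.exp (-1 * w) =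
        Real.exp (-((2 : ℝ) ^ β * w)) * Real.exp (((2 : ℝ) ^ β - 1) * w) := by
      rw [← Real.exp_add]; congr 1; ring
    have c3 := Real.add_one_le_exp (((2 : ℝ) ^ β - 1) * w)
    have c4 : (0 : ℝ) ≤ ((2 : ℝ) ^ β - 1) * w := mul_nonneg (by linarith) hw0.le
    rw [c2, neg_one_mul, hk]
    calc _ = (((2 : ℝ) ^ β - 1) * w) * Real.exp (-((2 : ℝ) ^ β * W)) := by ring
      _ ≤ (((2 : ℝ) ^ β - 1) * w) * Real.exp (-((2 : ℝ) ^ β * w)) := by gcongr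
      _ ≤ _ := by nlinarith [Real.exp_pos (-((2 : ℝ) ^ β * w))]
  have hup : 2 / N * (1 - Real.exp (-1 * (N ^ β * w))) ≤ k₀ / 2 * w := by
    calc _ ≤ 2 / N * (N ^ β * w) := by
          gcongr; linarith [Real.add_one_le_exp (-1 * (N ^ β * w))]
      _ = _ := by rw [hNβ]; field_simp; ring
  have hfin : k₀ / 2 * w ≤ D / (κ * P) * subKernel ζ σ 1 1 s := by
    unfold subKernel; linarith
  calc κ * k₀ / (2 * D) * (P * w) = κ * P / D * (k₀ / 2 * w) := by field_simp
    _ ≤ κ * P / D * (D / (κ * P) * subKernel ζ σ 1 1 s) := by gcongr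
    _ = _ := by field_simp

lemma exists_besselHeat_le_besselHeat {ζ C₀ : ℝ} (hζ : -1 / 2 < ζ) (hC0 : 0 < C₀) :
    ∃ K : ℝ, 0 < K ∧ ∀ τ z s : ℝ, 0 < τ → τ ≤ 1 → C₀ ≤ s → 0 < z → z ≤ s / 2 →
      besselHeat ζ τ z s ≤ K * besselHeat ζ 1 (1 / 4) (1 / 4 * s) := by
  have ha : 0 < ζ + 1 / 2 := by linarith
  obtain ⟨C, hC, hup⟩ := exists_besselHeat_le_of_le_half hζ
  obtain ⟨κ, hκ, hlow⟩ := exists_le_besselHeat hζ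
  set b := C₀ ^ 2 / 64 with hb
  have hb0 : 0 < b := by positivity
  set E := ((ζ + 1 / 2) / b) ^ (ζ + 1 / 2) with hE
  have hE0 : 0 < E := by positivity
  refine ⟨C * E * Real.exp (1 / 64) / κ, by positivity, fun τ z s hτ hτ1 hs hz hzs => ?_⟩
  have hs0 : 0 < s := hC0.trans_le hs
  have h1 := hup τ z s hτ hz hs0 hzs
  have h2 := hlow 1 (1 / 4) (1 / 4 * s) one_pos (by norm_num) (by positivity)
  have h3 : τ ^ (-(ζ + 1 / 2)) ≤ E * Real.exp (b * τ⁻¹) := by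
    have := rpow_le_mul_exp ha hb0 (inv_pos.2 hτ).le
    rwa [Real.inv_rpow hτ.le, ← Real.rpow_neg hτ.le] at this
  have h4 : b * τ⁻¹ + -(s ^ 2 / (32 * τ)) ≤ -(s ^ 2 / 64) := by
    have hsq : C₀ ^ 2 ≤ s ^ 2 := by gcongr
    have hinv : 1 ≤ τ⁻¹ := (one_le_inv₀ hτ).2 hτ1
    have e : s ^ 2 / (32 * τ) = s ^ 2 / 32 * τ⁻¹ := by field_simp
    rw [e, hb]
    nlinarith [sq_nonneg s]
  have e5 : Real.exp (-(s ^ 2 / 64)) =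
      Real.exp (1 / 64) * Real.exp (-((1 / 4) ^ 2 + (1 / 4 * s) ^ 2) / (4 * 1)) := by
    rw [← Real.exp_add]; congr 1; ring
  rw [Real.one_rpow, one_mul] at h2
  calc besselHeat ζ τ z s ≤ C * (τ ^ (-(ζ + 1 / 2)) * Real.exp (-(s ^ 2 / (32 * τ)))) := h1
    _ ≤ C * (E * Real.exp (b * τ⁻¹) * Real.exp (-(s ^ 2 / (32 * τ)))) := by gcongr
    _ = C * E * Real.exp (b * τ⁻¹ + -(s ^ 2 / (32 * τ))) := by rw [Real.exp_add]; ring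
    _ ≤ C * E * Real.exp (-(s ^ 2 / 64)) := by gcongr
    _ = C * E * Real.exp (1 / 64) / κ *
        (κ * Real.exp (-((1 / 4) ^ 2 + (1 / 4 * s) ^ 2) / (4 * 1))) := by
        rw [e5]; field_simp
    _ ≤ _ := by gcongr

theorem stmt17 (ζ α C₀ : ℝ) (hζ : -1/2 < ζ) (hα0 : 0 < α) (hα2 : α ≤ 2) (hC0 : 0 < C₀)
    (p : ℝ → ℝ → ℝ → ℝ) (hp : IsSubordinatedBesselKernel ζ α p) :
    ∃ c K : ℝ, 0 < c ∧ 0 < K ∧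
      ∀ τ z s : ℝ, 0 < τ → τ ≤ 1 → C₀ ≤ s → 0 < z → z ≤ s / 2 →
        p τ z s ≤ K * p 1 c (c * s) := by
  rcases hp with ⟨-, hp⟩ | ⟨hα, σ, hσ, hp⟩
  · obtain ⟨K, hK, h⟩ := exists_besselHeat_le_besselHeat hζ hC0
    refine ⟨1 / 4, K, by norm_num, hK, ?_⟩
    simpa only [hp] using h
  · obtain ⟨C, hC, hup⟩ := exists_subKernel_le hζ hα0 hσ
    obtain ⟨κ, hκ, hlow⟩ := exists_le_subKernel hζ hα0 hα hC0 hσ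
    refine ⟨1, C / κ, one_pos, by positivity, fun τ z s hτ hτ1 hs hz hzs => ?_⟩
    have hs0 : 0 < s := hC0.trans_le hs
    rw [hp, hp, one_mul]
    refine (hup τ z s hτ hτ1 hs0 hz hzs).trans ?_
    calc _ = C / κ * (κ * ((s ^ 2) ^ (-(ζ + 1 / 2)) * (1 / s ^ 2) ^ (α / 2))) := by field_simp
      _ ≤ _ := by gcongr; exact hlow s hs
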